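/- If the quasi-greedy orbit of 1 hits the point 1/(β(β−1)) for the first time, then the set of unique expansions Ũ_β is a subshift of finite type. -/

import Mathlib

/-- The value `Σ_{n≥1} a_n β^{-n}` of a digit sequence (indexed from 0, so `a i = a_{i+1}`). -/
noncomputable def betaVal (β : ℝ) (a : ℕ → ℕ) : ℝ := ∑' n : ℕ, (a n : ℝ) / β ^ (n + 1)

/-- `Ũ_β`: the set of 0-1 sequences that are the unique β-expansion of their value. -/
def UTilde (β : ℝ) : Set (ℕ → ℕ) :=
  {a | (∀ n, a n ≤ 1) ∧
    ∀ b : ℕ → ℕ, (∀ n, b n ≤ 1) → betaVal β b = betaVal β a → b = a}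

/-- The word `w` occurs in the sequence `x` starting at position `n`. -/
def OccursAt (w : List ℕ) (x : ℕ → ℕ) (n : ℕ) : Prop :=
  ∀ i : Fin w.length, x (n + i.1) = w.get i

/-- `Y` is a subshift of finite type inside the ambient full shift `{0,1}^ℕ`: there is a
finite set `F` of forbidden words such that `Y` consists exactly of the 0-1 sequences in
which no word of `F` occurs. -/
def IsSFT01 (Y : Set (ℕ → ℕ)) : Prop :=
  ∃ F : Set (List ℕ), F.Finite ∧
    Y = {x | (∀ n, x n ≤ 1) ∧ ∀ w ∈ F, ∀ n, ¬ OccursAt w x n}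

/-- Strict lexicographic order on sequences. -/
def LexLt (a b : ℕ → ℕ) : Prop :=
  ∃ n, (∀ k < n, a k = b k) ∧ a n < b n

/-- `η` is the quasi-greedy expansion of `1` in base `β`: the lexicographically largest
0-1 sequence with infinitely many digits `1` whose value is `1`. -/
def QuasiGreedy (β : ℝ) (η : ℕ → ℕ) : Prop :=
  (∀ n, η n ≤ 1) ∧ (∀ N, ∃ n ≥ N, η n = 1) ∧ betaVal β η = 1 ∧
    ∀ ζ : ℕ → ℕ, (∀ n, ζ n ≤ 1) → (∀ N, ∃ n ≥ N, ζ n = 1) →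
      betaVal β ζ = 1 → ζ ≠ η → LexLt ζ η

/-- The quasi-greedy orbit `Q` of `1` hits the point `c` for the first time: `Q k = c`
for some `k ≥ 1` while `Q i ∈ [0, 1/β) ∪ (1/(β(β-1)), 1/(β-1)]` for `1 ≤ i ≤ k - 1`. -/
def HitsFirst (β : ℝ) (Q : ℕ → ℝ) (c : ℝ) : Prop :=
  ∃ k ≥ 1, Q k = c ∧ ∀ i, 1 ≤ i → i ≤ k - 1 →
    Q i ∈ Set.Ico 0 (1 / β) ∪ Set.Ioc (1 / (β * (β - 1))) (1 / (β - 1))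

/-!
Suppose `1` has a β-expansion `η` whose `k`-th tail has value `1 / (β(β-1))`. Since `0111…` has this
value too, `α = η₁…η_k 0111…` is another expansion of `1`. A sequence is a unique expansion iff it
and its reflection are greedy, and, as in Parry's criterion, this holds iff in neither of them a
tail after a digit `0` is lexicographically larger than `α`. Equality of such a tail with `α` need
not be forbidden separately: it would produce a later `0` followed by `111…`, which is larger than
`α`. As `α` ends in ones, a 0-1 sequence can exceed it only at one of the first `k + 1` digits, so
the criterion is local.
-/

/-- The tail of `x` obtained by deleting its first `n` digits. -/
def shift (n : ℕ) (x : ℕ → ℕ) : ℕ → ℕ := fun i => x (n + i)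

/-- The first `n` digits of `x` followed by the whole sequence `y`. -/
def splice (n : ℕ) (x y : ℕ → ℕ) : ℕ → ℕ := fun i => if i < n then x i else y (i - n)

/-- Parry's condition characterizing the greedy (lexicographically largest) expansions: no digit
`0` could have been chosen to be `1`. The 0-1 sequences are the `x ≤ 1` and `1 - x` is the
reflection of `x`, so that `IsGreedy β (1 - x)` says that `x` is a lazy expansion. -/
def IsGreedy (β : ℝ) (x : ℕ → ℕ) : Prop :=
  ∀ n, x n = 0 → betaVal β (shift (n + 1) x) < 1

/-- The lexicographic counterpart of `IsGreedy`: the tail after a digit `0` never exceeds `α`. -/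
def LexAdmissible (α x : ℕ → ℕ) : Prop :=
  ∀ n, x n = 0 → ¬ LexLt α (shift (n + 1) x)

section Sequences

variable {x y : ℕ → ℕ}

lemma shift_shift (m n : ℕ) (x : ℕ → ℕ) : shift m (shift n x) = shift (n + m) x := by
  funext i
  simp only [shift, add_assoc]

lemma shift_le_one (hx : x ≤ 1) (n : ℕ) : shift n x ≤ 1 := fun i => hx (n + i)

lemma shift_one_sub (n : ℕ) (x : ℕ → ℕ) : shift n (1 - x) = 1 - shift n x := rfl

lemma splice_apply_of_lt {n i : ℕ} (h : i < n) : splice n x y i = x i := if_pos h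

lemma shift_splice (n : ℕ) (x y : ℕ → ℕ) : shift n (splice n x y) = y := by
  funext i
  simp [shift, splice]

lemma splice_add (n i : ℕ) (x y : ℕ → ℕ) : splice n x y (n + i) = y i :=
  congrFun (shift_splice n x y) i

lemma splice_le_one (hx : x ≤ 1) (hy : y ≤ 1) (n : ℕ) : splice n x y ≤ 1 := by
  intro i
  unfold splice
  split_ifs
  exacts [hx i, hy (i - n)]

lemma one_sub_one_sub (hx : x ≤ 1) : 1 - (1 - x) = x := tsub_tsub_cancel_of_le hx

lemma lexLt_trichotomy (x y : ℕ → ℕ) : LexLt x y ∨ x = y ∨ LexLt y x :=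
  lt_trichotomy (toLex x) (toLex y)

lemma LexLt.one_sub (hy : y ≤ 1) (h : LexLt x y) : LexLt (1 - y) (1 - x) := by
  obtain ⟨n, hpre, hlt⟩ := h
  refine ⟨n, fun i hi => ?_, ?_⟩
  · simp only [Pi.sub_apply, hpre i hi]
  · have : y n ≤ 1 := hy n
    simp only [Pi.sub_apply, Pi.one_apply]
    omega

lemma LexLt.exists_eq_zero_eq_one (hy : y ≤ 1) (h : LexLt x y) :
    ∃ n, (∀ i < n, x i = y i) ∧ x n = 0 ∧ y n = 1 := by
  obtain ⟨n, hpre, hlt⟩ := h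
  have : y n ≤ 1 := hy n
  exact ⟨n, hpre, by omega, by omega⟩

lemma LexLt.congr_prefix {α : ℕ → ℕ} {L : ℕ} (hα : ∀ i ≥ L, α i = 1) (hx : x ≤ 1)
    (hxy : ∀ i < L, x i = y i) (h : LexLt α x) : LexLt α y := by
  obtain ⟨n, hpre, hαn, hxn⟩ := h.exists_eq_zero_eq_one hx
  have hnL : n < L := by
    by_contra! hLn
    exact absurd (hα n hLn) (by omega)
  refine ⟨n, fun i hi => ?_, ?_⟩
  · rw [hpre i hi, hxy i (hi.trans hnL)]
  · rw [hαn, ← hxy n hnL, hxn]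
    exact one_pos

lemma isSFT01_of_local {P : (ℕ → ℕ) → Prop} {L : ℕ}
    (hP : ∀ x y, x ≤ 1 → y ≤ 1 → (∀ i < L, x i = y i) → P x → P y) :
    IsSFT01 {x | x ≤ 1 ∧ ∀ n, P (shift n x)} := by
  refine ⟨{w | ∃ x ≤ (1 : ℕ → ℕ), ¬ P x ∧ w = List.ofFn fun i : Fin L => x i}, ?_, ?_⟩
  · refine (Set.finite_range fun f : Fin L → Fin 2 => List.ofFn fun i => (f i : ℕ)).subset ?_
    rintro w ⟨x, hx, -, rfl⟩
    exact ⟨fun i => ⟨x i, Nat.lt_succ_of_le (hx i)⟩, rfl⟩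
  · ext x
    refine and_congr_right fun hx => ⟨?_, fun havoid n => ?_⟩
    · rintro hlocal w ⟨y, hy, hnot, rfl⟩ n hocc
      refine hnot (hP _ _ (shift_le_one hx n) hy (fun i hi => ?_) (hlocal n))
      simpa [shift] using hocc ⟨i, by simpa using hi⟩
    · by_contra hnot
      refine havoid _ ⟨shift n x, shift_le_one hx n, hnot, rfl⟩ n fun i => ?_
      rw [List.get_ofFn]
      rfl

end Sequences

section Value

variable {β : ℝ} {x y : ℕ → ℕ}

lemma hasSum_one_div_pow_succ (hβ : 1 < β) :
    HasSum (fun n : ℕ => 1 / β ^ (n + 1)) (1 / (β - 1)) := by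
  have hβ0 : 0 < β := zero_lt_one.trans hβ
  have hsum := (hasSum_geometric_of_lt_one (inv_nonneg.2 hβ0.le)
    (inv_lt_one_of_one_lt₀ hβ)).mul_left β⁻¹
  have hlimit : β⁻¹ * (1 - β⁻¹)⁻¹ = 1 / (β - 1) := by
    rw [← mul_inv, mul_sub, mul_one, mul_inv_cancel₀ hβ0.ne', one_div]
  rw [hlimit] at hsum
  simpa only [inv_pow, ← mul_inv, ← pow_succ', one_div] using hsum

lemma betaVal_one (hβ : 1 < β) : betaVal β 1 = 1 / (β - 1) := by
  simpa [betaVal] using (hasSum_one_div_pow_succ hβ).tsum_eq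

lemma summable_digit_div_pow (hβ : 1 < β) (hx : x ≤ 1) :
    Summable fun n => (x n : ℝ) / β ^ (n + 1) := by
  have : 0 < β := zero_lt_one.trans hβ
  refine (hasSum_one_div_pow_succ hβ).summable.of_nonneg_of_le (fun n => by positivity) fun n => ?_
  gcongr
  exact_mod_cast hx n

lemma betaVal_nonneg (hβ : 0 ≤ β) (x : ℕ → ℕ) : 0 ≤ betaVal β x :=
  tsum_nonneg fun _ => by positivity

lemma betaVal_pos (hβ : 1 < β) (hx : x ≤ 1) {n : ℕ} (hn : x n ≠ 0) : 0 < betaVal β x := by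
  have : 0 < β := zero_lt_one.trans hβ
  exact (summable_digit_div_pow hβ hx).tsum_pos (fun _ => by positivity) n (by positivity)

lemma betaVal_one_sub (hβ : 1 < β) (hx : x ≤ 1) :
    betaVal β (1 - x) = 1 / (β - 1) - betaVal β x := by
  refine (((hasSum_one_div_pow_succ hβ).sub
    (summable_digit_div_pow hβ hx).hasSum).congr_fun fun n => ?_).tsum_eq
  have hxn : x n ≤ 1 := hx n
  simp only [Pi.sub_apply, Pi.one_apply, Nat.cast_sub hxn, Nat.cast_one, sub_div]

lemma betaVal_le (hβ : 1 < β) (hx : x ≤ 1) : betaVal β x ≤ 1 / (β - 1) := by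
  have := betaVal_nonneg (zero_lt_one.trans hβ).le (1 - x)
  rw [betaVal_one_sub hβ hx] at this
  linarith

lemma betaVal_lt (hβ : 1 < β) (hx : x ≤ 1) {n : ℕ} (hn : x n = 0) :
    betaVal β x < 1 / (β - 1) := by
  have := betaVal_pos hβ (tsub_le_self : 1 - x ≤ 1) (n := n) (by simp [hn])
  rw [betaVal_one_sub hβ hx] at this
  linarith

lemma betaVal_eq_sum_add (hβ : 1 < β) (hx : x ≤ 1) (n : ℕ) :
    betaVal β x =
      ∑ i ∈ Finset.range n, (x i : ℝ) / β ^ (i + 1) + betaVal β (shift n x) / β ^ n := by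
  have htail : ∀ i, (x (i + n) : ℝ) / β ^ (i + n + 1) = x (n + i) / β ^ (i + 1) / β ^ n := by
    intro i
    rw [div_div, ← pow_add, add_right_comm, add_comm n i]
  rw [betaVal, ← (summable_digit_div_pow hβ hx).sum_add_tsum_nat_add n, betaVal, ← tsum_div_const]
  simp only [htail, shift]

lemma betaVal_eq_head_add (hβ : 1 < β) (hx : x ≤ 1) :
    betaVal β x = (x 0 + betaVal β (shift 1 x)) / β := by
  simp [betaVal_eq_sum_add hβ hx 1, add_div]

lemma betaVal_sub_of_prefix_eq (hβ : 1 < β) (hx : x ≤ 1) (hy : y ≤ 1) {n : ℕ}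
    (h : ∀ i < n, x i = y i) :
    betaVal β x - betaVal β y = (betaVal β (shift n x) - betaVal β (shift n y)) / β ^ n := by
  have hsum : ∑ i ∈ Finset.range n, (x i : ℝ) / β ^ (i + 1) =
      ∑ i ∈ Finset.range n, (y i : ℝ) / β ^ (i + 1) :=
    Finset.sum_congr rfl fun i hi => by rw [h i (Finset.mem_range.1 hi)]
  rw [betaVal_eq_sum_add hβ hx n, betaVal_eq_sum_add hβ hy n, hsum]
  ring

lemma betaVal_splice_eq (hβ : 1 < β) (hx : x ≤ 1) (hy : y ≤ 1) {n : ℕ}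
    (h : betaVal β y = betaVal β (shift n x)) : betaVal β (splice n x y) = betaVal β x := by
  have := betaVal_sub_of_prefix_eq hβ (splice_le_one hx hy n) hx
    fun i (hi : i < n) => splice_apply_of_lt hi
  rwa [shift_splice, h, sub_self, zero_div, sub_eq_zero] at this

lemma betaVal_sub_of_first_ne (hβ : 1 < β) (hx : x ≤ 1) (hy : y ≤ 1) {n : ℕ}
    (h : ∀ i < n, x i = y i) (hxn : x n = 0) (hyn : y n = 1) :
    β ^ (n + 1) * (betaVal β x - betaVal β y) =
      betaVal β (shift (n + 1) x) - 1 - betaVal β (shift (n + 1) y) := by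
  have hβ0 : β ≠ 0 := (zero_lt_one.trans hβ).ne'
  rw [betaVal_sub_of_prefix_eq hβ hx hy h, betaVal_eq_head_add hβ (shift_le_one hx n),
    betaVal_eq_head_add hβ (shift_le_one hy n), shift_shift, shift_shift]
  simp only [shift, add_zero, hxn, hyn]
  field_simp
  push_cast
  ring

end Value

section Existence

variable {β : ℝ}

lemma betaVal_eq_of_bounded_remainders (hβ : 1 < β) {d : ℕ → ℕ} (hd : d ≤ 1) {r : ℕ → ℝ} {C : ℝ}
    (hr : ∀ n, |r n| ≤ C) (hstep : ∀ n, r (n + 1) = β * r n - d n) : betaVal β d = r 0 := by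
  have hβ0 : 0 < β := zero_lt_one.trans hβ
  have hpartial : ∀ n, ∑ i ∈ Finset.range n, (d i : ℝ) / β ^ (i + 1) = r 0 - r n / β ^ n := by
    intro n
    induction n with
    | zero => simp
    | succ n ih =>
      rw [Finset.sum_range_succ, ih, hstep]
      field_simp
      ring
  have hsmall : Filter.Tendsto (fun n => r n / β ^ n) Filter.atTop (nhds 0) := by
    refine squeeze_zero_norm (fun n => ?_)
      ((tendsto_pow_atTop_atTop_of_one_lt hβ).const_div_atTop C)
    rw [norm_div, norm_pow, Real.norm_eq_abs, Real.norm_of_nonneg hβ0.le]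
    gcongr
    exact hr n
  have hsum := (summable_digit_div_pow hβ hd).hasSum.tendsto_sum_nat
  simp only [hpartial] at hsum
  exact tendsto_nhds_unique hsum (by simpa using hsmall.const_sub (r 0))

lemma exists_digit_mul_sub_mem (hβ1 : 1 < β) (hβ2 : β ≤ 2) {r : ℝ}
    (hr : r ∈ Set.Icc 0 (1 / (β - 1))) :
    ∃ d ≤ 1, β * r - (d : ℕ) ∈ Set.Icc 0 (1 / (β - 1)) := by
  obtain ⟨hr0, hr1⟩ := hr
  have hβ0 : 0 < β - 1 := sub_pos.2 hβ1
  have hone : 1 ≤ 1 / (β - 1) := by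
    rw [le_div_iff₀ hβ0]
    linarith
  have hfixed : β * (1 / (β - 1)) = 1 / (β - 1) + 1 := by
    field_simp
    ring
  have hmul0 : 0 ≤ β * r := by positivity
  have hmul1 : β * r ≤ 1 / (β - 1) + 1 := hfixed ▸ by gcongr
  rcases le_or_gt 1 (β * r) with h | h
  · exact ⟨1, le_rfl, by push_cast; linarith, by push_cast; linarith⟩
  · exact ⟨0, zero_le_one, by simpa using hmul0, by simpa using h.le.trans hone⟩

lemma exists_betaVal_eq (hβ1 : 1 < β) (hβ2 : β ≤ 2) {r : ℝ} (hr : r ∈ Set.Icc 0 (1 / (β - 1))) :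
    ∃ d ≤ (1 : ℕ → ℕ), betaVal β d = r := by
  choose! d hd hmem using fun s => exists_digit_mul_sub_mem (r := s) hβ1 hβ2
  have horbit : ∀ n, (fun s => β * s - d s)^[n] r ∈ Set.Icc 0 (1 / (β - 1)) := fun n =>
    Set.MapsTo.iterate (fun s hs => hmem s hs) n hr
  refine ⟨fun n => d ((fun s => β * s - d s)^[n] r), fun n => hd _ (horbit n), ?_⟩
  refine betaVal_eq_of_bounded_remainders hβ1 (fun n => hd _ (horbit n))
    (r := fun n => (fun s => β * s - d s)^[n] r) (C := 1 / (β - 1)) (fun n => ?_) fun n => ?_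
  · rw [abs_of_nonneg (horbit n).1]
    exact (horbit n).2
  · exact Function.iterate_succ_apply' _ _ _

end Existence

section UniqueExpansions

variable {β : ℝ} {x y : ℕ → ℕ}

lemma IsGreedy.tail (hx : IsGreedy β x) (n : ℕ) : IsGreedy β (shift n x) := by
  intro m hm
  rw [shift_shift]
  exact hx (n + m) hm

lemma IsGreedy.betaVal_lt (hβ : 1 < β) (hx : x ≤ 1) (hgreedy : IsGreedy β x) (hy : y ≤ 1)
    (h : LexLt x y) : betaVal β x < betaVal β y := by
  have hβ0 : 0 < β := zero_lt_one.trans hβ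
  obtain ⟨n, hpre, hxn, hyn⟩ := h.exists_eq_zero_eq_one hy
  have hdiff := betaVal_sub_of_first_ne hβ hx hy hpre hxn hyn
  have htailx := hgreedy n hxn
  have htaily := betaVal_nonneg hβ0.le (shift (n + 1) y)
  exact sub_neg.1 (neg_of_mul_neg_right (hdiff.trans_lt (by linarith)) (by positivity))

lemma betaVal_lt_of_lexLt_of_isGreedy_one_sub (hβ : 1 < β) (hx : x ≤ 1) (hy : y ≤ 1)
    (hlazy : IsGreedy β (1 - y)) (h : LexLt x y) : betaVal β x < betaVal β y := by
  have := hlazy.betaVal_lt hβ tsub_le_self tsub_le_self (h.one_sub hy)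
  rw [betaVal_one_sub hβ hx, betaVal_one_sub hβ hy] at this
  linarith

lemma shift_mem_UTilde (hβ : 1 < β) (hx : x ∈ UTilde β) (n : ℕ) : shift n x ∈ UTilde β := by
  refine ⟨shift_le_one hx.1 n, fun y hy heq => ?_⟩
  have hsplice := hx.2 (splice n x y) (splice_le_one hx.1 hy n) (betaVal_splice_eq hβ hx.1 hy heq)
  rw [← hsplice, shift_splice]

lemma one_sub_mem_UTilde (hβ : 1 < β) (hx : x ∈ UTilde β) : 1 - x ∈ UTilde β := by
  refine ⟨(tsub_le_self : 1 - x ≤ 1), fun y hy heq => ?_⟩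
  have hrefl := hx.2 (1 - y) (tsub_le_self : 1 - y ≤ 1) (by
    rw [betaVal_one_sub hβ hy, heq, betaVal_one_sub hβ hx.1, sub_sub_cancel])
  rw [← hrefl, one_sub_one_sub hy]

lemma betaVal_shift_one_lt_one_of_mem_UTilde (hβ1 : 1 < β) (hβ2 : β ≤ 2) (hx : x ∈ UTilde β)
    (hx0 : x 0 = 0) : betaVal β (shift 1 x) < 1 := by
  by_contra! hge
  have hle := betaVal_le hβ1 (shift_le_one hx.1 1)
  obtain ⟨y, hy, hval⟩ := exists_betaVal_eq hβ1 hβ2 (r := betaVal β (shift 1 x) - 1)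
    ⟨by linarith, by linarith⟩
  have hc : splice 1 1 y ≤ 1 := splice_le_one le_rfl hy 1
  have heq : splice 1 1 y = x := by
    refine hx.2 _ hc ?_
    rw [betaVal_eq_head_add hβ1 hc, betaVal_eq_head_add hβ1 hx.1, shift_splice, hval,
      splice_apply_of_lt one_pos, hx0]
    simp
  have hhead : splice 1 1 y 0 = 1 := splice_apply_of_lt one_pos
  rw [heq, hx0] at hhead
  exact zero_ne_one hhead

lemma isGreedy_of_mem_UTilde (hβ1 : 1 < β) (hβ2 : β ≤ 2) (hx : x ∈ UTilde β) : IsGreedy β x := by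
  intro n hn
  have := betaVal_shift_one_lt_one_of_mem_UTilde hβ1 hβ2 (shift_mem_UTilde hβ1 hx n) hn
  rwa [shift_shift] at this

lemma mem_UTilde_iff_isGreedy (hβ1 : 1 < β) (hβ2 : β ≤ 2) :
    x ∈ UTilde β ↔ x ≤ 1 ∧ IsGreedy β x ∧ IsGreedy β (1 - x) := by
  constructor
  · intro hx
    exact ⟨hx.1, isGreedy_of_mem_UTilde hβ1 hβ2 hx,
      isGreedy_of_mem_UTilde hβ1 hβ2 (one_sub_mem_UTilde hβ1 hx)⟩
  · rintro ⟨hx, hgreedy, hlazy⟩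
    refine ⟨hx, fun y hy heq => ?_⟩
    rcases lexLt_trichotomy y x with h | h | h
    · exact absurd heq (betaVal_lt_of_lexLt_of_isGreedy_one_sub hβ1 hy hx hlazy h).ne
    · exact h
    · exact absurd heq (hgreedy.betaVal_lt hβ1 hx hy h).ne'

end UniqueExpansions

section LexicographicCriterion

variable {β : ℝ} {α x : ℕ → ℕ} {k : ℕ}

lemma lexAdmissible_of_isGreedy (hβ : 1 < β) (hα : α ≤ 1) (hval : betaVal β α = 1) (hx : x ≤ 1)
    (hgreedy : IsGreedy β x) (hlazy : IsGreedy β (1 - x)) : LexAdmissible α x := by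
  intro n hn hlt
  have := betaVal_lt_of_lexLt_of_isGreedy_one_sub hβ hα (shift_le_one hx (n + 1))
    (hlazy.tail (n + 1)) hlt
  linarith [hgreedy n hn]

lemma nonpos_of_forall_pos_exists_mul_le {ι : Type*} {f : ι → ℝ} {c : ℝ} (hc : 1 < c)
    (hf : BddAbove (Set.range f)) (h : ∀ i, 0 < f i → ∃ j, c * f i ≤ f j) (i : ι) : f i ≤ 0 := by
  by_contra! hi
  have : Nonempty ι := ⟨i⟩
  have hc0 : 0 < c := zero_lt_one.trans hc
  have hsup : 0 < ⨆ i, f i := hi.trans_le (le_ciSup hf i)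
  obtain ⟨j, hj⟩ := exists_lt_of_lt_ciSup (div_lt_self hsup hc)
  obtain ⟨l, hl⟩ := h j ((div_pos hsup hc0).trans hj)
  have hjsup : ⨆ i, f i < c * f j := (div_lt_iff₀' hc0).1 hj
  exact (hjsup.trans_le hl).not_ge (le_ciSup hf l)

lemma LexAdmissible.eq_or_exists_tail (hβ : 1 < β) (hα : α ≤ 1) (hval : betaVal β α = 1)
    (hx : x ≤ 1) (hadm : LexAdmissible α x) {n : ℕ} (hn : x n = 0) :
    shift (n + 1) x = α ∨ ∃ m j, x m = 0 ∧
      β ^ (j + 1) * (betaVal β (shift (n + 1) x) - 1) =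
        betaVal β (shift (m + 1) x) - 1 - betaVal β (shift (j + 1) α) := by
  rcases lexLt_trichotomy (shift (n + 1) x) α with h | h | h
  · obtain ⟨j, hpre, hxj, hαj⟩ := h.exists_eq_zero_eq_one hα
    have := betaVal_sub_of_first_ne hβ (shift_le_one hx (n + 1)) hα hpre hxj hαj
    rw [hval, shift_shift] at this
    exact Or.inr ⟨n + 1 + j, j, hxj, this⟩
  · exact Or.inl h
  · exact absurd h (hadm n hn)

lemma LexAdmissible.betaVal_shift_le_one (hβ : 1 < β) (hα : α ≤ 1) (hval : betaVal β α = 1)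
    (hx : x ≤ 1) (hadm : LexAdmissible α x) {n : ℕ} (hn : x n = 0) :
    betaVal β (shift (n + 1) x) ≤ 1 := by
  have hβ0 : 0 ≤ β := zero_le_one.trans hβ.le
  let excess : {n // x n = 0} → ℝ := fun n => betaVal β (shift (n + 1) x) - 1
  have hbdd : BddAbove (Set.range excess) := by
    refine ⟨1 / (β - 1), ?_⟩
    rintro _ ⟨m, rfl⟩
    linarith [betaVal_le hβ (shift_le_one hx (m + 1))]
  refine sub_nonpos.1 (nonpos_of_forall_pos_exists_mul_le hβ hbdd ?_ ⟨n, hn⟩)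
  rintro ⟨m, hm⟩ hpos
  rcases hadm.eq_or_exists_tail hβ hα hval hx hm with heq | ⟨l, j, hl, hexpand⟩
  · simp [excess, heq, hval] at hpos
  · refine ⟨⟨l, hl⟩, ?_⟩
    calc β * excess ⟨m, hm⟩ ≤ β ^ (j + 1) * excess ⟨m, hm⟩ := by
          gcongr
          exact le_self_pow₀ hβ.le j.succ_ne_zero
      _ = excess ⟨l, hl⟩ - betaVal β (shift (j + 1) α) := hexpand
      _ ≤ excess ⟨l, hl⟩ := sub_le_self _ (betaVal_nonneg hβ0 _)

lemma lt_two_of_betaVal_eq_one (hβ : 1 < β) (hα : α ≤ 1) (hval : betaVal β α = 1)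
    (hαk : α k = 0) : β < 2 := by
  have := betaVal_lt hβ hα hαk
  rw [hval, lt_div_iff₀ (sub_pos.2 hβ)] at this
  linarith

lemma LexAdmissible.isGreedy (hβ : 1 < β) (hα : α ≤ 1) (hval : betaVal β α = 1) (hαk : α k = 0)
    (hones : shift (k + 1) α = 1) (hx : x ≤ 1) (hadm : LexAdmissible α x) : IsGreedy β x := by
  have : 0 < β := zero_lt_one.trans hβ
  intro n hn
  rcases hadm.eq_or_exists_tail hβ hα hval hx hn with heq | ⟨m, j, hm, hexpand⟩
  · have hzero : x (n + 1 + k) = 0 := (congrFun heq k).trans hαk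
    have hle := hadm.betaVal_shift_le_one hβ hα hval hx hzero
    rw [add_assoc (n + 1), ← shift_shift, heq, hones, betaVal_one hβ,
      div_le_one (sub_pos.2 hβ)] at hle
    linarith [lt_two_of_betaVal_eq_one hβ hα hval hαk]
  · have hle := hadm.betaVal_shift_le_one hβ hα hval hx hm
    have hone : shift (j + 1) α (k + 1) = 1 := by
      rw [shift, add_comm]
      exact congrFun hones (j + 1)
    have hpos : 0 < betaVal β (shift (j + 1) α) :=
      betaVal_pos hβ (shift_le_one hα _) (hone.trans_ne one_ne_zero)
    exact sub_neg.1 (neg_of_mul_neg_right (hexpand.trans_lt (by linarith)) (by positivity))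

lemma mem_UTilde_iff_lexAdmissible (hβ : 1 < β) (hα : α ≤ 1) (hval : betaVal β α = 1)
    (hαk : α k = 0) (hones : shift (k + 1) α = 1) :
    x ∈ UTilde β ↔ x ≤ 1 ∧ LexAdmissible α x ∧ LexAdmissible α (1 - x) := by
  rw [mem_UTilde_iff_isGreedy hβ (lt_two_of_betaVal_eq_one hβ hα hval hαk).le]
  refine and_congr_right fun hx => ⟨fun ⟨hgreedy, hlazy⟩ => ⟨?_, ?_⟩, fun ⟨hadm, hadm'⟩ => ⟨?_, ?_⟩⟩
  · exact lexAdmissible_of_isGreedy hβ hα hval hx hgreedy hlazy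
  · exact lexAdmissible_of_isGreedy hβ hα hval tsub_le_self hlazy (by rwa [one_sub_one_sub hx])
  · exact hadm.isGreedy hβ hα hval hαk hones hx
  · exact hadm'.isGreedy hβ hα hval hαk hones tsub_le_self

lemma isSFT01_lexAdmissible {L : ℕ} (hα : ∀ i ≥ L, α i = 1) :
    IsSFT01 {x | x ≤ 1 ∧ LexAdmissible α x ∧ LexAdmissible α (1 - x)} := by
  let P : (ℕ → ℕ) → Prop := fun x => x 0 = 0 → ¬ LexLt α (shift 1 x)
  have hP : ∀ x y, y ≤ 1 → (∀ i < L + 1, x i = y i) → P x → P y := by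
    intro x y hy hxy hPx hy0 hlt
    refine hPx ((hxy 0 L.succ_pos).trans hy0) ?_
    refine hlt.congr_prefix hα (shift_le_one hy 1) fun i hi => (hxy (1 + i) ?_).symm
    omega
  have hadm : ∀ x, LexAdmissible α x ↔ ∀ n, P (shift n x) := by
    intro x
    simp only [P, shift_shift]
    rfl
  have hlocal := isSFT01_of_local (P := fun x => P x ∧ P (1 - x)) (L := L + 1)
    fun x y _ hy hxy h => ⟨hP x y hy hxy h.1,
      hP (1 - x) (1 - y) tsub_le_self (fun i hi => by simp only [Pi.sub_apply, hxy i hi]) h.2⟩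
  simpa only [hadm, shift_one_sub, forall_and] using hlocal

theorem isSFT01_UTilde_of_eventually_one_expansion (hβ : 1 < β) (hα : α ≤ 1)
    (hval : betaVal β α = 1) (hαk : α k = 0) (hones : shift (k + 1) α = 1) :
    IsSFT01 (UTilde β) := by
  have hchar : UTilde β = {x | x ≤ 1 ∧ LexAdmissible α x ∧ LexAdmissible α (1 - x)} :=
    Set.ext fun _ => mem_UTilde_iff_lexAdmissible hβ hα hval hαk hones
  rw [hchar]
  refine isSFT01_lexAdmissible (L := k + 1) fun i hi => ?_
  obtain ⟨j, rfl⟩ := Nat.exists_eq_add_of_le hi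
  exact congrFun hones j

end LexicographicCriterion

lemma betaVal_zero_ones {β : ℝ} (hβ : 1 < β) :
    betaVal β (splice 1 0 1) = 1 / (β * (β - 1)) := by
  rw [betaVal_eq_head_add hβ (splice_le_one zero_le_one le_rfl 1), shift_splice, betaVal_one hβ,
    splice_apply_of_lt one_pos, Pi.zero_apply, Nat.cast_zero, zero_add, div_div, mul_comm]

theorem statement16_general {β : ℝ} (hβ : 1 < β) {η : ℕ → ℕ} (hη : η ≤ 1)
    (hval : betaVal β η = 1) {k : ℕ} (hk : betaVal β (shift k η) = 1 / (β * (β - 1))) :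
    IsSFT01 (UTilde β) := by
  have hzero_ones : splice 1 0 1 ≤ 1 := splice_le_one zero_le_one le_rfl 1
  refine isSFT01_UTilde_of_eventually_one_expansion (α := splice k η (splice 1 0 1)) (k := k) hβ
    (splice_le_one hη hzero_ones k) ?_ ?_ ?_
  · rw [betaVal_splice_eq hβ hη hzero_ones ((betaVal_zero_ones hβ).trans hk.symm), hval]
  · exact (splice_add k 0 η _).trans (splice_apply_of_lt one_pos)
  · rw [← shift_shift, shift_splice, shift_splice]

/-- if the quasi-greedy orbit of `1` hits `1/(β(β-1))` for the first time,
then `Ũ_β` is a subshift of finite type. -/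
theorem statement16 (β : ℝ) (hβ : β ∈ Set.Ioo (1 : ℝ) 2)
    (η : ℕ → ℕ) (hη : QuasiGreedy β η)
    (Q : ℕ → ℝ) (hQ : ∀ n, Q n = betaVal β (fun k => η (n + k)))
    (hhit : HitsFirst β Q (1 / (β * (β - 1)))) :
    IsSFT01 (UTilde β) := by
  obtain ⟨k, -, hk, -⟩ := hhit
  exact statement16_general hβ.1 hη.1 hη.2.2.1 ((hQ k).symm.trans hk)
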